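/- Let 1 ≤ p < ∞, let (S, 𝒮) be a measurable space, X, X_1, X_2, … i.i.d. S-valued random variables, and let f̄ : ℝ^d × S → ℝ be jointly measurable with ‖f̄(·, x)‖_{L_p(ℝ^d)} < ∞ for all x ∈ S and ‖E f̄(·, X)‖_{L_p(ℝ^d)} < ∞. Define the empirical process v̄_n(t) := n^{−1/2} Σ_{i=1}^n (f̄(t, X_i) − E f̄(t, X)), t ∈ ℝ^d, an L_p(ℝ^d)-valued random variable. Let K ∈ L_1(ℝ^d) with ∫ K = 1, and let 0 < a ≤ b < ∞. Assume: (ii) for every ε > 0, lim_{δ → 0} limsup_{n → ∞} Pr{ sup_{|u| ≤ δ} ‖ v̄_n(· − u) − v̄_n(·) ‖_{L_p(ℝ^d)} > ε } = 0; and (iii) the sequence ‖v̄_n‖_{L_p(ℝ^d)}, n ∈ ℕ, is stochastically bounded (tight in ℝ). Then for any sequence h_n → 0, sup_{a ≤ λ ≤ b} ‖ v̄_n * K_{λ h_n} − v̄_n ‖_{L_p(ℝ^d)} → 0 in probability as n → ∞. -/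

import Mathlib

open MeasureTheory Filter
open scoped ENNReal Topology
noncomputable section

/-- The empirical process `v̄_n(t) = n^{−1/2} Σ_{i=1}^n (f̄(t, X_i) − E f̄(t, X))`, realized on
the sample space `Fin n → S` carrying the product measure `P^n`. -/
def vbar {S : Type*} [MeasurableSpace S] (d : ℕ) (P : Measure S)
    (fbar : EuclideanSpace ℝ (Fin d) → S → ℝ) (n : ℕ) (ω : Fin n → S)
    (t : EuclideanSpace ℝ (Fin d)) : ℝ :=
  (Real.sqrt n)⁻¹ * ∑ i : Fin n, (fbar t (ω i) - ∫ x, fbar t x ∂P)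

/-- The `L_p(ℝ^d)` norm `(∫ |w(t)|^p dt)^{1/p}`. -/
def Np (d : ℕ) (p : ℝ) (w : EuclideanSpace ℝ (Fin d) → ℝ) : ℝ :=
  (∫ t : EuclideanSpace ℝ (Fin d), |w t| ^ p) ^ (1 / p)

lemma aux_ofReal {p : ℝ} (hp : 1 ≤ p) (x : ℝ) : ENNReal.ofReal (|x| ^ p) = ‖x‖ₑ ^ p := by
  rw [← ENNReal.ofReal_rpow_of_nonneg (abs_nonneg x) (by linarith), Real.enorm_eq_ofReal_abs]

lemma Np_nonneg (d : ℕ) (p : ℝ) (w : EuclideanSpace ℝ (Fin d) → ℝ) : 0 ≤ Np d p w :=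
  Real.rpow_nonneg (integral_nonneg fun _ => Real.rpow_nonneg (abs_nonneg _) _) _

lemma Np_le {d : ℕ} {p : ℝ} (hp : 1 ≤ p) {w : EuclideanSpace ℝ (Fin d) → ℝ} {B : ℝ} (hB : 0 ≤ B)
    (h : ∫⁻ t, ‖w t‖ₑ ^ p ≤ ENNReal.ofReal (B ^ p)) : Np d p w ≤ B := by
  have hp0 : 0 < p := by linarith
  have h1 : ∫ t, |w t| ^ p ≤ B ^ p := by
    have h2 := norm_integral_le_lintegral_norm (μ := volume) (fun t => |w t| ^ p)
    have h3 : ∀ t, ENNReal.ofReal ‖|w t| ^ p‖ = ‖w t‖ₑ ^ p := by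
      intro t
      rw [Real.norm_of_nonneg (Real.rpow_nonneg (abs_nonneg _) _), aux_ofReal hp]
    simp only [h3] at h2
    exact (le_abs_self _).trans (h2.trans (ENNReal.toReal_le_of_le_ofReal (Real.rpow_nonneg hB _) h))
  unfold Np
  calc _ ≤ (B ^ p) ^ (1 / p) := Real.rpow_le_rpow
          (integral_nonneg fun _ => Real.rpow_nonneg (abs_nonneg _) _) h1 (by positivity)
    _ = B := by rw [← Real.rpow_mul hB, mul_one_div_cancel hp0.ne', Real.rpow_one]

lemma Np_eq {d : ℕ} {p : ℝ} (hp : 1 ≤ p) {w : EuclideanSpace ℝ (Fin d) → ℝ} (hw : Measurable w)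
    (h : ∫⁻ t, ‖w t‖ₑ ^ p ≠ ⊤) : ∫⁻ t, ‖w t‖ₑ ^ p = ENNReal.ofReal (Np d p w ^ p) := by
  have hp0 : 0 < p := by linarith
  unfold Np
  rw [← Real.rpow_mul (integral_nonneg fun _ => Real.rpow_nonneg (abs_nonneg _) _),
    one_div_mul_cancel hp0.ne', Real.rpow_one,
    integral_eq_lintegral_of_nonneg_ae (ae_of_all _ fun _ => Real.rpow_nonneg (abs_nonneg _) _)
      ((hw.norm.pow_const p).aestronglyMeasurable)]
  simp only [aux_ofReal hp]
  rw [ENNReal.ofReal_toReal h]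

lemma shift_bound {d : ℕ} {p : ℝ} (hp : 1 ≤ p) {v : EuclideanSpace ℝ (Fin d) → ℝ}
    (hv : Measurable v) (u : EuclideanSpace ℝ (Fin d)) :
    ∫⁻ t, ‖v (t - u) - v t‖ₑ ^ p ≤ 2 ^ p * ∫⁻ t, ‖v t‖ₑ ^ p := by
  have hp0 : 0 < p := by linarith
  calc ∫⁻ t, ‖v (t - u) - v t‖ₑ ^ p
      ≤ ∫⁻ t, 2 ^ (p - 1) * (‖v (t - u)‖ₑ ^ p + ‖v t‖ₑ ^ p) := by
        refine lintegral_mono fun t => ?_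
        exact (ENNReal.rpow_le_rpow enorm_sub_le hp0.le).trans
          (ENNReal.rpow_add_le_mul_rpow_add_rpow _ _ hp)
    _ = 2 ^ (p - 1) * ((∫⁻ t, ‖v t‖ₑ ^ p) + ∫⁻ t, ‖v t‖ₑ ^ p) := by
        rw [lintegral_const_mul _ (by fun_prop), lintegral_add_right _ (by fun_prop),
          lintegral_sub_right_eq_self (fun t => ‖v t‖ₑ ^ p) u]
    _ = _ := by
        rw [← two_mul, ← mul_assoc]
        congr 1
        nth_rewrite 2 [← ENNReal.rpow_one 2]
        rw [← ENNReal.rpow_add _ _ (by simp) (by simp)]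
        simp

lemma jensen_aux {α : Type*} [MeasurableSpace α] {p : ℝ} (hp : 1 ≤ p) (μ : Measure α)
    {g : α → ℝ≥0∞} (hg : AEMeasurable g μ) :
    (∫⁻ x, g x ∂μ) ^ p ≤ μ Set.univ ^ (p - 1) * ∫⁻ x, g x ^ p ∂μ := by
  rcases eq_or_lt_of_le hp with rfl | hp1
  · simp
  have hp0 : 0 < p := by linarith
  have hpq : p.HolderConjugate (p / (p - 1)) := Real.HolderConjugate.conjExponent hp1
  have h := ENNReal.lintegral_mul_le_Lp_mul_Lq μ hpq hg (aemeasurable_const (b := (1 : ℝ≥0∞)))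
  simp only [Pi.mul_apply, mul_one, ENNReal.one_rpow, lintegral_const, one_mul] at h
  calc _ ≤ _ := ENNReal.rpow_le_rpow h hp0.le
    _ = _ := by
      rw [ENNReal.mul_rpow_of_nonneg _ _ hp0.le, ← ENNReal.rpow_mul, ← ENNReal.rpow_mul,
        one_div_mul_cancel hp0.ne', ENNReal.rpow_one, mul_comm]
      congr 2
      field_simp

lemma conv_pt {d : ℕ} (hd : 1 ≤ d) {v : EuclideanSpace ℝ (Fin d) → ℝ}
    (hv : Measurable v) {K : EuclideanSpace ℝ (Fin d) → ℝ} (hK : Integrable K)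
    (hK1 : ∫ u, K u = 1) {h : ℝ} (hh : 0 < h) (t : EuclideanSpace ℝ (Fin d)) :
    ‖(∫ u, v (t - u) * (h⁻¹ * K ((h ^ ((1 : ℝ) / d))⁻¹ • u))) - v t‖ₑ ≤
      ∫⁻ u, ‖v (t - (h ^ ((1 : ℝ) / d)) • u) - v t‖ₑ ∂(volume.withDensity fun u => ‖K u‖ₑ) := by
  set c := h ^ ((1 : ℝ) / d) with hc
  have hc0 : 0 < c := Real.rpow_pos_of_pos hh _
  have hcd : c ^ d = h := by
    rw [hc, ← Real.rpow_natCast, ← Real.rpow_mul hh.le, one_div_mul_cancel (by positivity),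
      Real.rpow_one]
  have e1 : (∫ u, v (t - u) * (h⁻¹ * K (c⁻¹ • u))) = ∫ u, v (t - c • u) * K u := by
    have := Measure.integral_comp_inv_smul (volume : Measure (EuclideanSpace ℝ (Fin d)))
      (fun u => v (t - c • u) * K u) c
    simp only [smul_inv_smul₀ hc0.ne', finrank_euclideanSpace, Fintype.card_fin, hcd,
      abs_of_pos hh, smul_eq_mul] at this
    have e : ∀ u, v (t - u) * (h⁻¹ * K (c⁻¹ • u)) = h⁻¹ * (v (t - u) * K (c⁻¹ • u)) :=
      fun u => by ring
    simp only [e]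
    rw [integral_const_mul, this, inv_mul_cancel_left₀ hh.ne']
  have hm : Measurable fun u => v (t - c • u) := by fun_prop
  have e2 : ∫⁻ u, ‖v (t - c • u) - v t‖ₑ ∂(volume.withDensity fun u => ‖K u‖ₑ)
      = ∫⁻ u, ‖v (t - c • u) * K u - v t * K u‖ₑ := by
    rw [lintegral_withDensity_eq_lintegral_mul₀ hK.aestronglyMeasurable.enorm (by fun_prop)]
    refine lintegral_congr fun u => ?_
    rw [← sub_mul, enorm_mul, Pi.mul_apply, mul_comm]
  rw [e1, e2]
  have hc : Integrable (fun u => v t * K u) := hK.const_mul _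
  by_cases hi : Integrable (fun u => v (t - c • u) * K u)
  · have : (∫ u, v (t - c • u) * K u) - v t = ∫ u, (v (t - c • u) * K u - v t * K u) := by
      rw [integral_sub hi hc, integral_const_mul, hK1, mul_one]
    rw [this]
    exact enorm_integral_le_lintegral_enorm _
  · have : ∫⁻ u, ‖v (t - c • u) * K u - v t * K u‖ₑ = ⊤ := by
      by_contra hne
      apply hi
      have h2 : Integrable (fun u => v (t - c • u) * K u - v t * K u) :=
        ⟨(hm.aestronglyMeasurable.mul hK.aestronglyMeasurable).sub hc.aestronglyMeasurable,
          lt_top_iff_ne_top.2 hne⟩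
      refine (h2.add hc).congr (ae_of_all _ fun u => ?_)
      simp
    rw [this]; exact le_top

lemma conv_Lp {d : ℕ} {p : ℝ} (hp : 1 ≤ p) {v : EuclideanSpace ℝ (Fin d) → ℝ}
    (hv : Measurable v) (hvf : ∫⁻ t, ‖v t‖ₑ ^ p ≠ ⊤)
    (μ : Measure (EuclideanSpace ℝ (Fin d))) [IsFiniteMeasure μ]
    {M ε₁ δ B τ R c : ℝ} (hM : μ Set.univ ≤ ENNReal.ofReal M) (hM0 : 0 ≤ M) (hτ : 0 ≤ τ)
    (hB : Np d p v ≤ B)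
    (hδ : ∀ u ∈ Metric.closedBall (0 : EuclideanSpace ℝ (Fin d)) δ,
      Np d p (fun t => v (t - u) - v t) ≤ ε₁)
    (hR : μ {u | R < ‖u‖} ≤ ENNReal.ofReal τ) (hc : 0 < c) (hcR : c * R ≤ δ) (hε : 0 ≤ ε₁)
    {A : EuclideanSpace ℝ (Fin d) → ℝ}
    (hA : ∀ t, ‖A t‖ₑ ≤ ∫⁻ u, ‖v (t - c • u) - v t‖ₑ ∂μ) :
    ∫⁻ t, ‖A t‖ₑ ^ p ≤ ENNReal.ofReal (M ^ (p - 1) * (ε₁ ^ p * M + 2 ^ p * B ^ p * τ)) := by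
  have hp0 : 0 < p := by linarith
  have hB0 : 0 ≤ B := (Np_nonneg _ _ _).trans hB
  have hvB : ∫⁻ t, ‖v t‖ₑ ^ p ≤ ENNReal.ofReal (B ^ p) := by
    rw [Np_eq hp hv hvf]
    exact ENNReal.ofReal_le_ofReal (Real.rpow_le_rpow (Np_nonneg _ _ _) hB hp0.le)
  have hb1 : ∀ u, ∫⁻ t, ‖v (t - u) - v t‖ₑ ^ p ≤ ENNReal.ofReal (2 ^ p * B ^ p) := by
    intro u
    rw [ENNReal.ofReal_mul (by positivity), ← ENNReal.ofReal_rpow_of_nonneg (by norm_num) hp0.le]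
    refine (shift_bound hp hv u).trans ?_
    simp only [ENNReal.ofReal_ofNat]
    gcongr
  have hb2 : ∀ u, ‖u‖ ≤ R → ∫⁻ t, ‖v (t - c • u) - v t‖ₑ ^ p ≤ ENNReal.ofReal (ε₁ ^ p) := by
    intro u hu
    have hm : Measurable fun t => v (t - c • u) - v t := by fun_prop
    rw [Np_eq hp hm (ne_top_of_le_ne_top ENNReal.ofReal_ne_top (hb1 _))]
    refine ENNReal.ofReal_le_ofReal (Real.rpow_le_rpow (Np_nonneg _ _ _) (hδ _ ?_) hp0.le)
    rw [mem_closedBall_zero_iff, norm_smul, Real.norm_of_nonneg hc.le]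
    exact (mul_le_mul_of_nonneg_left hu hc.le).trans hcR
  have hmS : MeasurableSet {u : EuclideanSpace ℝ (Fin d) | R < ‖u‖} :=
    measurableSet_lt measurable_const measurable_norm
  calc ∫⁻ t, ‖A t‖ₑ ^ p
      ≤ ∫⁻ t, μ Set.univ ^ (p - 1) * ∫⁻ u, ‖v (t - c • u) - v t‖ₑ ^ p ∂μ := by
        refine lintegral_mono fun t => ?_
        exact (ENNReal.rpow_le_rpow (hA t) hp0.le).trans
          (jensen_aux hp μ (by fun_prop))
    _ = μ Set.univ ^ (p - 1) * ∫⁻ u, (∫⁻ t, ‖v (t - c • u) - v t‖ₑ ^ p) ∂μ := by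
        rw [lintegral_const_mul' _ _ (ENNReal.rpow_ne_top_of_nonneg (by linarith)
          (measure_ne_top _ _)), lintegral_lintegral_swap]
        apply Measurable.aemeasurable
        simp only [Function.uncurry_def]
        fun_prop
    _ ≤ ENNReal.ofReal (M ^ (p - 1)) *
          (ENNReal.ofReal (ε₁ ^ p) * ENNReal.ofReal M +
            ENNReal.ofReal (2 ^ p * B ^ p) * ENNReal.ofReal τ) := by
        gcongr
        · rw [← ENNReal.ofReal_rpow_of_nonneg hM0 (by linarith)]
          exact ENNReal.rpow_le_rpow hM (by linarith)
        · rw [← lintegral_add_compl _ hmS, add_comm]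
          gcongr
          · calc _ ≤ ∫⁻ u in {u | R < ‖u‖}ᶜ, ENNReal.ofReal (ε₁ ^ p) ∂μ :=
                  setLIntegral_mono' hmS.compl fun u hu => hb2 u (not_lt.1 hu)
              _ ≤ _ := by
                rw [setLIntegral_const]
                gcongr
                exact (measure_mono (Set.subset_univ _)).trans hM
          · calc _ ≤ ∫⁻ u in {u | R < ‖u‖}, ENNReal.ofReal (2 ^ p * B ^ p) ∂μ :=
                  lintegral_mono fun u => hb1 _
              _ ≤ _ := by
                rw [setLIntegral_const]
                gcongr
    _ = _ := by
        rw [← ENNReal.ofReal_mul (by positivity), ← ENNReal.ofReal_mul (by positivity),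
          ← ENNReal.ofReal_add (by positivity) (by positivity), ← ENNReal.ofReal_mul (by positivity)]

lemma tail_small {d : ℕ} (μ : Measure (EuclideanSpace ℝ (Fin d))) [IsFiniteMeasure μ]
    {τ : ℝ} (hτ : 0 < τ) : ∃ R : ℝ, μ {u | R < ‖u‖} ≤ ENNReal.ofReal τ := by
  have h : Tendsto (fun k : ℕ => μ {u | (k : ℝ) < ‖u‖}) atTop
      (𝓝 (μ (⋂ k : ℕ, {u | (k : ℝ) < ‖u‖}))) := by
    apply tendsto_measure_iInter_atTop
    · exact fun k => (measurableSet_lt measurable_const measurable_norm).nullMeasurableSet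
    · intro i j hij u hu
      have : (i : ℝ) ≤ j := by exact_mod_cast hij
      exact lt_of_le_of_lt this hu
    · exact ⟨0, measure_ne_top _ _⟩
  have h0 : (⋂ k : ℕ, {u : EuclideanSpace ℝ (Fin d) | (k : ℝ) < ‖u‖}) = ∅ := by
    ext u
    simp only [Set.mem_iInter, Set.mem_setOf_eq, Set.mem_empty_iff_false, iff_false, not_forall,
      not_lt]
    exact exists_nat_ge _
  rw [h0, measure_empty] at h
  obtain ⟨k, hk⟩ := (h.eventually (gt_mem_nhds (ENNReal.ofReal_pos.2 hτ))).exists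
  exact ⟨k, hk.le⟩

lemma vbar_prop {S : Type*} [MeasurableSpace S] (d : ℕ) {p : ℝ} (hp : 1 ≤ p)
    (P : Measure S) [IsProbabilityMeasure P]
    (fbar : EuclideanSpace ℝ (Fin d) → S → ℝ)
    (hmeas : Measurable (fun q : (EuclideanSpace ℝ (Fin d)) × S => fbar q.1 q.2))
    (hLp : ∀ x : S, (∫⁻ t : EuclideanSpace ℝ (Fin d), ENNReal.ofReal (|fbar t x| ^ p)) ≠ ⊤)
    (hLpE : (∫⁻ t : EuclideanSpace ℝ (Fin d), ENNReal.ofReal (|∫ x, fbar t x ∂P| ^ p)) ≠ ⊤)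
    (n : ℕ) (ω : Fin n → S) :
    Measurable (vbar d P fbar n ω) ∧ ∫⁻ t, ‖vbar d P fbar n ω t‖ₑ ^ p ≠ ⊤ := by
  have hp0 : 0 < p := by linarith
  have hpn : ENNReal.ofReal p ≠ 0 := by simpa using hp0
  have key : ∀ w : EuclideanSpace ℝ (Fin d) → ℝ,
      eLpNorm w (ENNReal.ofReal p) volume < ⊤ ↔ ∫⁻ t, ‖w t‖ₑ ^ p < ⊤ := by
    intro w
    rw [eLpNorm_lt_top_iff_lintegral_rpow_enorm_lt_top hpn ENNReal.ofReal_ne_top,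
      ENNReal.toReal_ofReal hp0.le]
  simp only [aux_ofReal hp] at hLp hLpE
  have m1 : ∀ x, Measurable fun t => fbar t x := fun x =>
    hmeas.comp (measurable_id.prodMk measurable_const)
  have m2 : Measurable fun t => ∫ x, fbar t x ∂P :=
    (StronglyMeasurable.integral_prod_right (f := fbar) hmeas.stronglyMeasurable).measurable
  have l1 : ∀ x, MemLp (fun t => fbar t x) (ENNReal.ofReal p) volume := fun x =>
    ⟨(m1 x).aestronglyMeasurable, (key _).2 (lt_top_iff_ne_top.2 (hLp x))⟩
  have l2 : MemLp (fun t => ∫ x, fbar t x ∂P) (ENNReal.ofReal p) volume :=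
    ⟨m2.aestronglyMeasurable, (key _).2 (lt_top_iff_ne_top.2 hLpE)⟩
  constructor
  · unfold vbar
    fun_prop
  · refine ((key _).1 (MemLp.eLpNorm_lt_top ?_)).ne
    unfold vbar
    exact (memLp_finset_sum _ fun i _ => (l1 (ω i)).sub l2).const_mul _

/-- (Proposition 1.) Let `1 ≤ p < ∞`, `f̄ : ℝ^d × S → ℝ` jointly measurable with
`‖f̄(·,x)‖_p < ∞` for all `x` and `‖E f̄(·,X)‖_p < ∞`, let `K ∈ L_1(ℝ^d)` with `∫ K = 1` and
`0 < a ≤ b < ∞`. Assume (ii) `lim_{δ→0} limsup_n Pr{sup_{|u|≤δ} ‖v̄_n(·−u) − v̄_n‖_p > ε} = 0`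
for every `ε > 0`, and (iii) the sequence `‖v̄_n‖_p` is stochastically bounded. Then for any
`h_n → 0` (with `h_n > 0`), `sup_{a ≤ λ ≤ b} ‖v̄_n * K_{λ h_n} − v̄_n‖_p → 0` in probability,
where `K_h(t) = h^{−1} K(t/h^{1/d})`. -/
theorem stmt19 (d : ℕ) (hd : 1 ≤ d) (p : ℝ) (hp : 1 ≤ p)
    (S : Type) [MeasurableSpace S] (P : Measure S) [IsProbabilityMeasure P]
    (fbar : EuclideanSpace ℝ (Fin d) → S → ℝ)
    (hmeas : Measurable (fun q : (EuclideanSpace ℝ (Fin d)) × S => fbar q.1 q.2))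
    (hInt : ∀ t, Integrable (fun x => fbar t x) P)
    (hLp : ∀ x : S, (∫⁻ t : EuclideanSpace ℝ (Fin d), ENNReal.ofReal (|fbar t x| ^ p)) ≠ ⊤)
    (hLpE : (∫⁻ t : EuclideanSpace ℝ (Fin d), ENNReal.ofReal (|∫ x, fbar t x ∂P| ^ p)) ≠ ⊤)
    (K : EuclideanSpace ℝ (Fin d) → ℝ) (hK_int : Integrable K)
    (hK_one : (∫ u : EuclideanSpace ℝ (Fin d), K u) = 1)
    (a b : ℝ) (ha : 0 < a) (hab : a ≤ b)
    -- (ii) local L_p-equicontinuity in probability of the empirical process: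
    (hii : ∀ ε : ℝ, 0 < ε → ∀ η : ℝ, 0 < η → ∃ δ : ℝ, 0 < δ ∧
      Filter.limsup (fun n : ℕ =>
          (Measure.pi fun _ : Fin n => P)
            {ω : Fin n → S | ε <
              ⨆ u : Metric.closedBall (0 : EuclideanSpace ℝ (Fin d)) δ,
                Np d p (fun t => vbar d P fbar n ω (t - (u : EuclideanSpace ℝ (Fin d))) -
                  vbar d P fbar n ω t)}) atTop ≤ ENNReal.ofReal η)
    -- (iii) stochastic boundedness of `‖v̄_n‖_p`:
    (hiii : ∀ η : ℝ, 0 < η → ∃ Mb : ℝ, ∀ n : ℕ,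
      (Measure.pi fun _ : Fin n => P)
        {ω : Fin n → S | Mb < Np d p (vbar d P fbar n ω)} ≤ ENNReal.ofReal η)
    (hn : ℕ → ℝ) (hnpos : ∀ n, 0 < hn n) (hn0 : Tendsto hn atTop (nhds 0)) :
    ∀ ε : ℝ, 0 < ε →
      Tendsto (fun n : ℕ =>
          (Measure.pi fun _ : Fin n => P)
            {ω : Fin n → S | ε <
              ⨆ l : Set.Icc a b,
                Np d p (fun t =>
                  (∫ u, vbar d P fbar n ω (t - u) *
                    (((l : ℝ) * hn n)⁻¹ *
                      K ((((l : ℝ) * hn n) ^ ((1 : ℝ) / d))⁻¹ • u))) -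
                  vbar d P fbar n ω t)}) atTop (nhds 0) := by
  intro ε hε
  have hp0 : 0 < p := by linarith
  set μ : Measure (EuclideanSpace ℝ (Fin d)) := volume.withDensity fun u => ‖K u‖ₑ with hμ
  haveI : IsFiniteMeasure μ := isFiniteMeasure_withDensity hK_int.2.ne
  set M : ℝ := (μ Set.univ).toReal + 1 with hMdef
  have hM0 : 0 < M := by positivity
  have hM : μ Set.univ ≤ ENNReal.ofReal M := by
    rw [ENNReal.le_ofReal_iff_toReal_le (measure_ne_top _ _) hM0.le]
    linarith
  rw [ENNReal.tendsto_nhds_zero]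
  intro η' hη'
  obtain ⟨η, hη0, hηle⟩ : ∃ η : ℝ, 0 < η ∧ ENNReal.ofReal (3 * η) ≤ η' := by
    rcases eq_or_ne η' ⊤ with rfl | hne
    · exact ⟨1, one_pos, le_top⟩
    · refine ⟨η'.toReal / 3, div_pos (ENNReal.toReal_pos hη'.ne' hne) (by norm_num), ?_⟩
      rw [mul_div_cancel₀ _ (by norm_num : (3 : ℝ) ≠ 0), ENNReal.ofReal_toReal hne]
  obtain ⟨B₀, hB₀⟩ := hiii η hη0
  set B : ℝ := |B₀| + 1
  have hBpos : 0 < B := by positivity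
  have hBB : B₀ ≤ B := (le_abs_self _).trans (by simp [B])
  set ε₁ : ℝ := ε / (2 * M) with hε₁
  have hε₁0 : 0 < ε₁ := by positivity
  set τ : ℝ := ε ^ p / (2 * (M ^ (p - 1) * (2 ^ p * B ^ p))) with hτ
  have hτ0 : 0 < τ := by positivity
  have hfin : M ^ (p - 1) * (ε₁ ^ p * M + 2 ^ p * B ^ p * τ) ≤ ε ^ p := by
    have a1 : M ^ (p - 1) * (2 ^ p * B ^ p * τ) = ε ^ p / 2 := by
      rw [hτ]; field_simp
    have a2 : M ^ (p - 1) * (ε₁ ^ p * M) ≤ ε ^ p / 2 := by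
      have : M ^ (p - 1) * (ε₁ ^ p * M) = ε ^ p / 2 ^ p := by
        rw [hε₁, Real.div_rpow hε.le (by positivity), Real.mul_rpow (by norm_num) hM0.le,
          Real.rpow_sub_one hM0.ne']
        field_simp
      rw [this]
      gcongr
      calc (2 : ℝ) = 2 ^ (1 : ℝ) := by simp
        _ ≤ 2 ^ p := Real.rpow_le_rpow_of_exponent_le (by norm_num) hp
    rw [mul_add]; linarith
  obtain ⟨R, hR⟩ := tail_small μ hτ0
  obtain ⟨δ, hδ0, hδ⟩ := hii ε₁ hε₁0 η hη0
  have hev1 := eventually_lt_of_limsup_lt (lt_of_le_of_lt hδ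
    ((ENNReal.ofReal_lt_ofReal_iff (by positivity)).2 (by linarith : η < 2 * η)))
  have hev2 : ∀ᶠ n in atTop, (b * hn n) ^ ((1 : ℝ) / d) * |R| ≤ δ := by
    have hd' : (0 : ℝ) < 1 / d := by positivity
    have t1 : Tendsto (fun n => (b * hn n) ^ ((1 : ℝ) / d) * |R|) atTop (𝓝 0) := by
      have := ((hn0.const_mul b).rpow_const (p := (1 : ℝ) / d) (Or.inr hd'.le)).mul_const |R|
      simpa [Real.zero_rpow (by positivity : ((d : ℝ))⁻¹ ≠ 0)] using this
    exact (t1.eventually (gt_mem_nhds hδ0)).mono fun _ h => h.le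
  filter_upwards [hev1, hev2] with n h1 h2
  have hsub : {ω : Fin n → S | ε <
              ⨆ l : Set.Icc a b,
                Np d p (fun t =>
                  (∫ u, vbar d P fbar n ω (t - u) *
                    (((l : ℝ) * hn n)⁻¹ *
                      K ((((l : ℝ) * hn n) ^ ((1 : ℝ) / d))⁻¹ • u))) -
                  vbar d P fbar n ω t)} ⊆
      {ω : Fin n → S | ε₁ <
              ⨆ u : Metric.closedBall (0 : EuclideanSpace ℝ (Fin d)) δ,
                Np d p (fun t => vbar d P fbar n ω (t - (u : EuclideanSpace ℝ (Fin d))) -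
                  vbar d P fbar n ω t)} ∪
      {ω : Fin n → S | B₀ < Np d p (vbar d P fbar n ω)} := by
    intro ω hω
    by_contra hcon
    simp only [Set.mem_union, Set.mem_setOf_eq, not_or, not_lt] at hcon
    obtain ⟨c1, c2⟩ := hcon
    obtain ⟨hv, hvf⟩ := vbar_prop d hp P fbar hmeas hLp hLpE n ω
    refine absurd hω (not_lt.2 (Real.iSup_le (fun l => ?_) hε.le))
    have hl0 : 0 < (l : ℝ) := ha.trans_le l.2.1
    have hlh : 0 < (l : ℝ) * hn n := mul_pos hl0 (hnpos n)
    have hbdd : BddAbove (Set.range fun u : Metric.closedBall (0 : EuclideanSpace ℝ (Fin d)) δ =>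
        Np d p (fun t => vbar d P fbar n ω (t - (u : EuclideanSpace ℝ (Fin d))) -
                  vbar d P fbar n ω t)) := by
      refine ⟨2 * Np d p (vbar d P fbar n ω), ?_⟩
      rintro _ ⟨u, rfl⟩
      refine Np_le hp (mul_nonneg zero_le_two (Np_nonneg _ _ _)) ?_
      refine (shift_bound hp hv _).trans ?_
      rw [Np_eq hp hv hvf, Real.mul_rpow zero_le_two (Np_nonneg _ _ _),
        ENNReal.ofReal_mul (by positivity),
        ← ENNReal.ofReal_rpow_of_nonneg (by norm_num : (0 : ℝ) ≤ 2) hp0.le]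
      simp
    refine Np_le hp hε.le (le_trans ?_ (ENNReal.ofReal_le_ofReal hfin))
    refine conv_Lp hp hv hvf μ hM hM0.le hτ0.le (c2.trans hBB) (δ := δ)
      (fun u hu => (le_ciSup hbdd ⟨u, hu⟩).trans c1) hR
      (Real.rpow_pos_of_pos hlh ((1 : ℝ) / d)) ?_ hε₁0.le
      (fun t => conv_pt hd hv hK_int hK_one hlh t)
    refine le_trans ?_ h2
    refine (mul_le_mul_of_nonneg_left (le_abs_self R) (Real.rpow_nonneg hlh.le _)).trans ?_
    refine mul_le_mul_of_nonneg_right (Real.rpow_le_rpow hlh.le ?_ (by positivity)) (abs_nonneg R)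
    exact mul_le_mul_of_nonneg_right l.2.2 (hnpos n).le
  calc _ ≤ _ := measure_mono hsub
    _ ≤ _ := measure_union_le _ _
    _ ≤ ENNReal.ofReal (2 * η) + ENNReal.ofReal η := add_le_add h1.le (hB₀ n)
    _ = ENNReal.ofReal (3 * η) := by
      rw [← ENNReal.ofReal_add (by positivity) (by positivity)]; congr 1; ring
    _ ≤ η' := hηle
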